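/- arXiv:0901.1632 — 3 statements merged into one kernel-verified Lean document; each statement's English description precedes it below -/
import Mathlib

section
/- The element h_{2,0}²·(h_{2,1}·h_{2,2} + h_{1,2}·h_{3,1}) + h_{1,1}·h_{1,3}·h_{3,0}² of B lies in the image of d. (This is the relation b₂₀·h₁(1) = h₁·h₃·b₃₀ in the E₂-term of the motivic May spectral sequence.) -/
/-!
Write `h₀(1)` for the `2 × 2` minor `h_{2,0} h_{2,1} + h_{1,1} h_{3,0}` of the strictly upper
triangular matrix of generators, on which `d` is matrix squaring. In characteristic two it is a
cycle, so `d (h_{4,0} h₀(1)) = (d h_{4,0}) h₀(1)`. The summand `h_{1,0} h_{3,1} h₀(1)` of this is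
removed by the relation `h_{1,0} h₀(1) = h_{1,2} h_{2,0}²`, which is witnessed by
`h_{2,0} h_{3,0}`: adding `d (h_{2,0} h_{3,0} h_{3,1})` turns `d (h_{4,0} h₀(1))` into the
required element.
-/

open MvPolynomial Finset

/-- The polynomial ring over `ZMod 2` on a variable `τ` (indexed by `none`) and
variables `h_{i,j}` for integers `i ≥ 1`, `j ≥ 0`; the variable `h_{i,j}` is
indexed by `some (i - 1, j)`.  Its cohomology with respect to the May
differential computes the `E₂`-term of the motivic May spectral sequence. -/
abbrev MayB : Type := MvPolynomial (Option (ℕ × ℕ)) (ZMod 2)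

/-- The polynomial generator `τ`. -/
noncomputable def tau : MayB := X none

/-- The polynomial generator `h_{i,j}` (meaningful for `i ≥ 1`, `j ≥ 0`). -/
noncomputable def h (i j : ℕ) : MayB := X (some (i - 1, j))

/-- The differential of the May complex on a family of elements `x i j` (the generators
`h_{i,j}`) of a commutative algebra. Nothing is required of `x 0 j`, which corresponds to no
generator. -/
def IsMayDifferential {R A : Type*} [CommSemiring R] [CommSemiring A] [Algebra R A]
    (d : Derivation R A A) (x : ℕ → ℕ → A) : Prop :=
  ∀ i j : ℕ, 1 ≤ i → d (x i j) = ∑ k ∈ Icc 1 (i - 1), x k j * x (i - k) (k + j)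

/-- The element `h_j(1) = h_{2,j} h_{2,j+1} + h_{1,j+1} h_{3,j}` of the May complex. If `h_{i,j}`
is placed at the entry `(j, i + j)` of a matrix, this is, up to signs, the minor on rows `j, j + 1`
and columns `j + 2, j + 3`. -/
def mayMinor {A : Type*} [Semiring A] (x : ℕ → ℕ → A) (j : ℕ) : A :=
  x 2 j * x 2 (j + 1) + x 1 (j + 1) * x 3 j

namespace IsMayDifferential

section CommSemiring

variable {R A : Type*} [CommSemiring R] [CommSemiring A] [Algebra R A]
  {d : Derivation R A A} {x : ℕ → ℕ → A}

theorem apply_one (hd : IsMayDifferential d x) (j : ℕ) : d (x 1 j) = 0 := by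
  simp [hd 1 j le_rfl]

theorem apply_two (hd : IsMayDifferential d x) (j : ℕ) :
    d (x 2 j) = x 1 j * x 1 (j + 1) := by
  simp [hd 2 j (by decide), add_comm]

theorem apply_three (hd : IsMayDifferential d x) (j : ℕ) :
    d (x 3 j) = x 1 j * x 2 (j + 1) + x 2 j * x 1 (j + 2) := by
  simp [hd 3 j (by decide), sum_Icc_succ_top, add_comm j]

theorem apply_four (hd : IsMayDifferential d x) (j : ℕ) :
    d (x 4 j) = x 1 j * x 3 (j + 1) + x 2 j * x 2 (j + 2) + x 3 j * x 1 (j + 3) := by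
  simp [hd 4 j (by decide), sum_Icc_succ_top, add_comm j]

theorem apply_two_mul_three (hd : IsMayDifferential d x) (j : ℕ) :
    d (x 2 j * x 3 j) = x 1 j * mayMinor x j + x 1 (j + 2) * x 2 j ^ 2 := by
  simp only [Derivation.leibniz, smul_eq_mul, hd.apply_two, hd.apply_three, mayMinor]
  ring

end CommSemiring

section CharTwo

variable {R A : Type*} [CommSemiring R] [CommRing A] [CharP A 2] [Algebra R A]
  {d : Derivation R A A} {x : ℕ → ℕ → A}

theorem apply_mayMinor (hd : IsMayDifferential d x) (j : ℕ) : d (mayMinor x j) = 0 := by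
  simp only [mayMinor, map_add, Derivation.leibniz, smul_eq_mul, hd.apply_one, hd.apply_two,
    hd.apply_three]
  linear_combination (x 1 j * x 1 (j + 1) * x 2 (j + 1) + x 2 j * x 1 (j + 1) * x 1 (j + 2)) *
    CharTwo.two_eq_zero (R := A)

theorem apply_four_mul_mayMinor (hd : IsMayDifferential d x) (j : ℕ) :
    d (x 4 j * mayMinor x j) =
      (x 1 j * x 3 (j + 1) + x 2 j * x 2 (j + 2) + x 3 j * x 1 (j + 3)) * mayMinor x j := by
  rw [Derivation.leibniz, hd.apply_mayMinor, hd.apply_four, smul_zero, zero_add, smul_eq_mul,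
    mul_comm]

end CharTwo

end IsMayDifferential

theorem motivic_may_relation_b20_h11_general {R A : Type*} [CommSemiring R] [CommRing A]
    [CharP A 2] [Algebra R A] {d : Derivation R A A} {x : ℕ → ℕ → A}
    (hd : IsMayDifferential d x) (j : ℕ) :
    ∃ q : A, d q =
      x 2 j ^ 2 * mayMinor x (j + 1) + x 1 (j + 1) * x 1 (j + 3) * x 3 j ^ 2 := by
  have d_correction : d (x 2 j * x 3 j * x 3 (j + 1)) =
      x 2 j * x 3 j * (x 1 (j + 1) * x 2 (j + 2) + x 2 (j + 1) * x 1 (j + 3)) +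
        x 3 (j + 1) * (x 1 j * mayMinor x j + x 1 (j + 2) * x 2 j ^ 2) := by
    rw [Derivation.leibniz, hd.apply_three, hd.apply_two_mul_three, smul_eq_mul, smul_eq_mul]
  refine ⟨x 4 j * mayMinor x j + x 2 j * x 3 j * x 3 (j + 1), ?_⟩
  rw [map_add, hd.apply_four_mul_mayMinor, d_correction]
  simp only [mayMinor]
  linear_combination (x 1 j * x 3 (j + 1) * (x 2 j * x 2 (j + 1) + x 1 (j + 1) * x 3 j) +
    x 2 j * x 3 j * (x 1 (j + 1) * x 2 (j + 2) + x 2 (j + 1) * x 1 (j + 3))) *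
      CharTwo.two_eq_zero (R := A)

/-- The element
`h_{2,0}^2 (h_{2,1} h_{2,2} + h_{1,2} h_{3,1}) + h_{1,1} h_{1,3} h_{3,0}^2`
lies in the image of the motivic May differential
(the relation `b20 * h1(1) = h1 * h3 * b30`). -/
theorem motivic_may_relation_b20_h11 (d : Derivation (ZMod 2) MayB MayB)
    (htau : d tau = 0)
    (hh : ∀ i j : ℕ, 1 ≤ i →
      d (h i j) = ∑ k ∈ Finset.Icc 1 (i - 1), h k j * h (i - k) (k + j)) :
    ∃ q : MayB, d q =
      (h 2 0) ^ 2 * (h 2 1 * h 2 2 + h 1 2 * h 3 1)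
        + h 1 1 * h 1 3 * (h 3 0) ^ 2 :=
  motivic_may_relation_b20_h11_general (x := h) hh 0
end

section
/- The element (h_{2,0}·h_{2,1} + h_{1,1}·h_{3,0})·(h_{2,1}·h_{2,2} + h_{1,2}·h_{3,1}) of B lies in the image of d. (This is the relation h₀(1)·h₁(1) = 0 in the E₂-term of the motivic May spectral sequence.) -/
open MvPolynomial Finset

/-! Placing `h_{i,j}` in position `(j, i + j)` gives a strictly upper triangular matrix `U`, for
which the formula for `d` reads `d U = U * U`. In characteristic two the factors of the relation are
the `2 × 2` minors of `U` with rows `0, 1`, columns `2, 3` and with rows `1, 2`, columns `3, 4`. If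
`M` is the minor with rows `0, 1` and columns `3, 4`, then over any commutative ring the product of
these two minors is `M * d U₁₃ - U₁₃ * d M`, which in characteristic two is `d (U₁₃ * M)`. -/

section CovBy

variable {ι M : Type*} [LinearOrder ι] [LocallyFiniteOrder ι] [AddCommMonoid M] {a b c : ι}

theorem sum_Ioo_of_covBy_left (g : ι → M) (hab : a ⋖ b) (hbc : b < c) :
    ∑ l ∈ Ioo a c, g l = g b + ∑ l ∈ Ioo b c, g l := by
  have hIoo : Ioo a c = Ico b c := by
    simpa only [← coe_inj, coe_Ioo, coe_Ico] using hab.Ioo_eq_Ico c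
  rw [hIoo, add_sum_Ioo_eq_sum_Ico hbc]

theorem sum_Ioo_of_covBy_right (g : ι → M) (hab : a < b) (hbc : b ⋖ c) :
    ∑ l ∈ Ioo a c, g l = ∑ l ∈ Ioo a b, g l + g b := by
  have hIoo : Ioo a c = Ioc a b := by
    simpa only [← coe_inj, coe_Ioo, coe_Ioc] using hbc.Ioo_eq_Ioc a
  rw [hIoo, sum_Ioo_add_eq_sum_Ioc hab]

end CovBy

section MaurerCartan

variable {ι R A : Type*} [CommSemiring R] [CommRing A] [Algebra R A]

/-- The `2 × 2` minor of `U` with rows `a, b` and columns `c, e`, in these orders. The elements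
`h_j(1)` of the May spectral sequence are such minors in characteristic two. -/
def twoMinor (U : Matrix ι ι A) (a b c e : ι) : A := (U.submatrix ![a, b] ![c, e]).det

theorem twoMinor_eq (U : Matrix ι ι A) (a b c e : ι) :
    twoMinor U a b c e = U a c * U b e - U a e * U b c :=
  Matrix.det_fin_two _

variable [LinearOrder ι] [LocallyFiniteOrder ι]

/-- The Maurer–Cartan equation `d U = U * U` for a strictly upper triangular matrix `U`. Only the
entries above the diagonal matter: the others are left arbitrary and never enter the sums. -/
def IsMaurerCartan (d : Derivation R A A) (U : Matrix ι ι A) : Prop :=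
  ∀ ⦃a b : ι⦄, a < b → d (U a b) = ∑ l ∈ Ioo a b, U a l * U l b

namespace IsMaurerCartan

variable {d : Derivation R A A} {U : Matrix ι ι A} {a b e f : ι}

-- The terms with `l = b` combine to `U a b * twoMinor U b b e f` and those with `l = e` to
-- `twoMinor U a b e e * U e f`; both vanish.
theorem deriv_twoMinor (hU : IsMaurerCartan d U) (hab : a ⋖ b) (hbe : b < e) (hef : e ⋖ f) :
    d (twoMinor U a b e f) =
      ∑ l ∈ Ioo b e, (U a l * twoMinor U l b e f + U b l * twoMinor U a l e f) := by
  have expand : ∑ l ∈ Ioo b e, (U a l * twoMinor U l b e f + U b l * twoMinor U a l e f) =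
      (∑ l ∈ Ioo b e, U a l * U l e) * U b f + U a e * ∑ l ∈ Ioo b e, U b l * U l f -
        ((∑ l ∈ Ioo b e, U a l * U l f) * U b e + U a f * ∑ l ∈ Ioo b e, U b l * U l e) := by
    simp only [mul_sum, sum_mul, ← sum_add_distrib, ← sum_sub_distrib, twoMinor_eq]
    exact sum_congr rfl fun l _ ↦ by ring
  have hae : d (U a e) = U a b * U b e + ∑ l ∈ Ioo b e, U a l * U l e := by
    rw [hU (hab.lt.trans hbe), sum_Ioo_of_covBy_left _ hab hbe]
  have hbf : d (U b f) = ∑ l ∈ Ioo b e, U b l * U l f + U b e * U e f := by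
    rw [hU (hbe.trans hef.lt), sum_Ioo_of_covBy_right _ hbe hef]
  have haf : d (U a f) =
      U a b * U b f + (∑ l ∈ Ioo b e, U a l * U l f + U a e * U e f) := by
    rw [hU (hab.lt.trans (hbe.trans hef.lt)), sum_Ioo_of_covBy_left _ hab (hbe.trans hef.lt),
      sum_Ioo_of_covBy_right _ hbe hef]
  rw [expand, twoMinor_eq, map_sub, d.leibniz, d.leibniz, hae, hbf, haf, hU hbe]
  simp only [smul_eq_mul]
  ring

theorem sum_twoMinor_mul_twoMinor (hU : IsMaurerCartan d U) (hab : a ⋖ b) (hbe : b < e)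
    (hef : e ⋖ f) :
    ∑ l ∈ Ioo b e, twoMinor U a b l e * twoMinor U b l e f =
      twoMinor U a b e f * d (U b e) - U b e * d (twoMinor U a b e f) := by
  rw [hU.deriv_twoMinor hab hbe hef, hU hbe, mul_sum, mul_sum, ← sum_sub_distrib]
  refine sum_congr rfl fun l _ ↦ ?_
  simp only [twoMinor_eq]
  ring

theorem deriv_mul_twoMinor [CharP A 2] (hU : IsMaurerCartan d U) (hab : a ⋖ b) (hbe : b < e)
    (hef : e ⋖ f) :
    d (U b e * twoMinor U a b e f) =
      ∑ l ∈ Ioo b e, twoMinor U a b l e * twoMinor U b l e f := by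
  rw [hU.sum_twoMinor_mul_twoMinor hab hbe hef, CharTwo.sub_eq_add, d.leibniz, smul_eq_mul,
    smul_eq_mul, add_comm]

end IsMaurerCartan

end MaurerCartan

section MayGenerators

variable {R A : Type*}

/-- The matrix with the May generator `x_{i,j}` in position `(j, i + j)`. Entries on or below the
diagonal are the meaningless `x_{0,j}`, because of truncated subtraction. -/
def mayMatrix (x : ℕ → ℕ → A) : Matrix ℕ ℕ A := Matrix.of fun a b ↦ x (b - a) a

theorem mayMatrix_apply (x : ℕ → ℕ → A) (a b : ℕ) : mayMatrix x a b = x (b - a) a := rfl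

variable [CommSemiring R] [CommRing A] [Algebra R A]

theorem isMaurerCartan_mayMatrix {d : Derivation R A A} {x : ℕ → ℕ → A}
    (hx : ∀ i j : ℕ, 1 ≤ i → d (x i j) = ∑ k ∈ Icc 1 (i - 1), x k j * x (i - k) (k + j)) :
    IsMaurerCartan d (mayMatrix x) := by
  intro a b hab
  rw [mayMatrix_apply, hx (b - a) a (by lia)]
  refine sum_nbij' (· + a) (· - a) ?_ ?_ ?_ ?_ ?_ <;> intro k hk <;>
    simp only [mem_Icc, mem_Ioo] at hk ⊢
  any_goals lia
  rw [mayMatrix_apply, mayMatrix_apply, Nat.add_sub_cancel, Nat.sub_sub, Nat.add_comm a k]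

theorem twoMinor_mayMatrix [CharP A 2] (x : ℕ → ℕ → A) (j : ℕ) :
    twoMinor (mayMatrix x) j (j + 1) (j + 2) (j + 3) =
      x 2 j * x 2 (j + 1) + x 1 (j + 1) * x 3 j := by
  have hsub : j + 3 - (j + 1) = 2 ∧ j + 2 - (j + 1) = 1 := by lia
  rw [twoMinor_eq, CharTwo.sub_eq_add, mul_comm (x 1 _)]
  simp only [mayMatrix_apply, Nat.add_sub_cancel_left, hsub]

theorem motivic_may_relation_h01_h11_general [CharP A 2] (d : Derivation R A A) (x : ℕ → ℕ → A)
    (hx : ∀ i j : ℕ, 1 ≤ i → d (x i j) = ∑ k ∈ Icc 1 (i - 1), x k j * x (i - k) (k + j))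
    (j : ℕ) :
    ∃ q : A, d q =
      (x 2 j * x 2 (j + 1) + x 1 (j + 1) * x 3 j) *
        (x 2 (j + 1) * x 2 (j + 2) + x 1 (j + 2) * x 3 (j + 1)) := by
  have hU : IsMaurerCartan d (mayMatrix x) := isMaurerCartan_mayMatrix hx
  have hIoo : Ioo (j + 1) (j + 3) = {j + 2} := by
    ext l
    simp only [mem_Ioo, mem_singleton]
    lia
  have hcov : j + 3 ⋖ j + 4 := Order.covBy_add_one (j + 3)
  refine ⟨mayMatrix x (j + 1) (j + 3) * twoMinor (mayMatrix x) j (j + 1) (j + 3) (j + 4), ?_⟩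
  rw [hU.deriv_mul_twoMinor (Order.covBy_add_one j) (by lia) hcov, hIoo, sum_singleton,
    twoMinor_mayMatrix x j, twoMinor_mayMatrix x (j + 1)]

end MayGenerators

/-- The element
`(h_{2,0} h_{2,1} + h_{1,1} h_{3,0}) (h_{2,1} h_{2,2} + h_{1,2} h_{3,1})`
lies in the image of the motivic May differential
(the relation `h0(1) * h1(1) = 0`). -/
theorem motivic_may_relation_h01_h11 (d : Derivation (ZMod 2) MayB MayB)
    (htau : d tau = 0)
    (hh : ∀ i j : ℕ, 1 ≤ i →
      d (h i j) = ∑ k ∈ Finset.Icc 1 (i - 1), h k j * h (i - k) (k + j)) :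
    ∃ q : MayB, d q =
      (h 2 0 * h 2 1 + h 1 1 * h 3 0) * (h 2 1 * h 2 2 + h 1 2 * h 3 1) := by
  exact motivic_may_relation_h01_h11_general d h hh 0
end

section
/- Let a, b, c be natural numbers with a < 2b and 2c ≤ a. If the binomial coefficient choose(b − 1 − c, a − 2c) is odd, then ⌊a/2⌋ + ⌊b/2⌋ = ⌊(a + b − c)/2⌋ + ⌊c/2⌋ + ε, where ε = 1 if a and b are both even and c is odd, and ε = 0 otherwise. (This says that in the motivic Adem relation Sq^a Sq^b = Σ_c choose(b−1−c, a−2c)·τ^?·Sq^{a+b−c} Sq^c, the exponent of τ required to make the relation homogeneous in the motivic weight is 1 exactly when a and b are even and c is odd, and 0 otherwise.) -/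
/-!
Halving with rounding down is additive except on a pair of odd numbers, where `m / 2 + n / 2` falls
short of `(m + n) / 2` by `1`. Both sides of the Adem relation have total degree `a + b`, so the
exponent of `τ` is the defect of the pair `(a + b - c, c)` minus that of `(a, b)`. When `a` is even
this difference is the claimed `ε`; when `a` is odd, the absorption identity
`n * choose (n - 1) (k - 1) = choose n k * k` modulo `2` forces `b` and `c` to have the same parity,
and the two defects agree.
-/

theorem dvd_of_dvd_of_coprime_choose {d n k : ℕ} (hn : d ∣ n) (h : d.Coprime (n.choose k)) :
    d ∣ k := by
  rcases n with _ | n <;> rcases k with _ | k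
  · exact dvd_zero d
  · have d_eq_one : d = 1 := by simpa using h
    simp [d_eq_one]
  · exact dvd_zero d
  · have absorption : (n + 1) * n.choose k = (n + 1).choose (k + 1) * (k + 1) :=
      Nat.add_one_mul_choose_eq n k
    exact h.dvd_of_dvd_mul_left (absorption ▸ hn.mul_right _)

theorem odd_of_odd_choose {n k : ℕ} (h : Odd (n.choose k)) (hk : Odd k) : Odd n := by
  contrapose! hk
  rw [Nat.not_odd_iff_even, even_iff_two_dvd] at hk ⊢
  exact dvd_of_dvd_of_coprime_choose hk (Nat.coprime_two_left.mpr h)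

theorem odd_iff_odd_of_odd_adem_choose {a b c : ℕ} (hca : 2 * c ≤ a) (ha : Odd a)
    (hodd : Odd ((b - 1 - c).choose (a - 2 * c))) : Odd b ↔ Odd c := by
  have lower_odd : Odd (a - 2 * c) := Nat.Odd.sub_even hca ha (even_two_mul c)
  have upper_odd : Odd (b - 1 - c) := odd_of_odd_choose hodd lower_odd
  -- An odd `b - 1 - c` is nonzero, so its subtractions do not truncate.
  grind

theorem add_div_two_eq_div_two_add_div_two (m n : ℕ) :
    (m + n) / 2 = m / 2 + n / 2 + if Odd m ∧ Odd n then 1 else 0 := by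
  grind

/-- In the motivic Adem relation
`Sq^a Sq^b = Σ_c choose (b-1-c) (a-2c) * τ^? * Sq^(a+b-c) Sq^c` (for `a < 2b`),
the exponent of `τ` needed to make the relation homogeneous in the motivic
weight (the weight of `Sq^n` being `⌊n/2⌋`) is `1` exactly when `a` and `b`
are even and `c` is odd, and `0` otherwise: whenever the binomial coefficient
`choose (b-1-c) (a-2c)` is odd, one has
`⌊a/2⌋ + ⌊b/2⌋ = ⌊(a+b-c)/2⌋ + ⌊c/2⌋ + ε` with `ε` as described. -/
theorem motivic_adem_tau_exponent (a b c : ℕ) (hab : a < 2 * b) (hca : 2 * c ≤ a)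
    (hodd : Odd (Nat.choose (b - 1 - c) (a - 2 * c))) :
    a / 2 + b / 2
      = (a + b - c) / 2 + c / 2 + (if Even a ∧ Even b ∧ Odd c then 1 else 0) := by
  have total_degree : a + b - c + c = a + b := by lia
  have weight_eq : a / 2 + b / 2 + (if Odd a ∧ Odd b then 1 else 0) =
      (a + b - c) / 2 + c / 2 + (if Odd (a + b - c) ∧ Odd c then 1 else 0) := by
    rw [← add_div_two_eq_div_two_add_div_two, ← add_div_two_eq_div_two_add_div_two, total_degree]
  rcases Nat.even_or_odd a with ha | ha
  · have defect_iff : Odd (a + b - c) ∧ Odd c ↔ Even a ∧ Even b ∧ Odd c := by grind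
    simpa [Nat.not_odd_iff_even.mpr ha, defect_iff] using weight_eq
  · have same_parity : Odd b ↔ Odd c := odd_iff_odd_of_odd_adem_choose hca ha hodd
    have defect_iff : Odd (a + b - c) ∧ Odd c ↔ Odd a ∧ Odd b := by grind
    simpa [Nat.not_even_iff_odd.mpr ha, defect_iff] using weight_eq
end
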